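/- arXiv:math/0302349 — 4 statements merged into one kernel-verified Lean document; each statement's English description precedes it below -/
import Mathlib

section
/- Let Φ : (0,∞) → ℝ be C^∞ with Φ'(s) > 0 for all s > 0 and lim_{s→∞} Φ(s) finite, and let (u,l,r) be a Type II solution of u_t = (Φ(u_x))_x on (0,T) with initial data u₀ : [a,b] → ℝ. Then the interfaces are monotone: l(t) is monotonically nondecreasing on (0,T) and r(t) is monotonically nonincreasing on (0,T); in particular l(t) ≥ a and r(t) ≤ b for all t. -/
open Set Filter Topology

/-- The space-time domain `Ω = {(x,t) : 0 < t < T, l(t) < x < r(t)}` of a Type II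
solution (time horizon `T ∈ (0,∞]` is encoded as an extended real number). -/
def typeIIDomain (T : EReal) (l r : ℝ → ℝ) : Set (ℝ × ℝ) :=
  {p : ℝ × ℝ | 0 < p.2 ∧ (p.2 : EReal) < T ∧ l p.2 < p.1 ∧ p.1 < r p.2}

/-- A Type II solution of `u_t = (Φ(u_x))_x` with initial data `u₀ : [a,b] → ℝ`:
continuous interface curves `l, r` on `[0,T)` with `l(0) = a`, `r(0) = b`,
`l(t) < r(t)`, a function `u` continuous on the closure of
`Ω = {(x,t) : 0 < t < T, l(t) < x < r(t)}` and smooth in `Ω`, solving the equation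
in `Ω`, taking the initial data on `[a,b]`, the boundary values `u = 0` on `x = l(t)`
and `u = 1` on `x = r(t)`, with `∂ₓu → +∞` at both lateral boundaries. -/
structure IsTypeIISolution (Φ : ℝ → ℝ) (T : EReal) (a b : ℝ) (u₀ : ℝ → ℝ)
    (u : ℝ → ℝ → ℝ) (l r : ℝ → ℝ) : Prop where
  T_pos : 0 < T
  l_init : l 0 = a
  r_init : r 0 = b
  l_lt_r : ∀ t : ℝ, 0 < t → (t : EReal) < T → l t < r t
  l_cont : ContinuousOn l {t : ℝ | 0 ≤ t ∧ (t : EReal) < T}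
  r_cont : ContinuousOn r {t : ℝ | 0 ≤ t ∧ (t : EReal) < T}
  u_cont : ContinuousOn (fun p : ℝ × ℝ => u p.1 p.2) (closure (typeIIDomain T l r))
  u_smooth : ContDiffOn ℝ (⊤ : ℕ∞) (fun p : ℝ × ℝ => u p.1 p.2) (typeIIDomain T l r)
  pde : ∀ x t : ℝ, (x, t) ∈ typeIIDomain T l r →
    deriv (fun s => u x s) t = deriv (fun y => Φ (deriv (fun z => u z t) y)) x
  init : ∀ x : ℝ, a ≤ x → x ≤ b → u x 0 = u₀ x
  bdry_left : ∀ t : ℝ, 0 < t → (t : EReal) < T → u (l t) t = 0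
  bdry_right : ∀ t : ℝ, 0 < t → (t : EReal) < T → u (r t) t = 1
  grad_left : ∀ t : ℝ, 0 < t → (t : EReal) < T →
    Tendsto (fun x => deriv (fun z => u z t) x) (nhdsWithin (l t) (Ioi (l t))) atTop
  grad_right : ∀ t : ℝ, 0 < t → (t : EReal) < T →
    Tendsto (fun x => deriv (fun z => u z t) x) (nhdsWithin (r t) (Iio (r t))) atTop

/-!
A line of slope `k` drifting to the left with speed `1 / k` is a strict supersolution of
`u_t = (Φ(u_x))_x`, and a solution whose gradient blows up at `l` cannot touch it from below at
the left interface. Placed above the solution at time `t₁`, it therefore stays above it as long as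
it exceeds `1` at the right interface, so its zero stays to the left of `l`. As `k → ∞` the line
becomes vertical and stationary, and its zero may start arbitrarily close to `l t₁`; hence `l` never
retreats below `l t₁`. The right interface follows from the symmetry `u(x, t) ↦ 1 - u(-x, t)`.
-/

section OneVariable

variable {f Φ : ℝ → ℝ} {x k : ℝ} {s : Set ℝ}

lemma eventually_nhdsGT_lt_of_deriv_pos (hf : 0 < deriv f x) : ∀ᶠ y in 𝓝[>] x, f x < f y := by
  have hsign := eventually_nhdsWithin_sign_eq_of_deriv_pos (f := fun y => f y - f x) (x₀ := x)
    (by simpa only [deriv_sub_const_fun] using hf) (sub_self _)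
  filter_upwards [hsign.filter_mono nhdsWithin_le_nhds, self_mem_nhdsWithin] with y hy (hxy : x < y)
  rwa [sign_pos (sub_pos.2 hxy), sign_eq_one_iff, sub_pos] at hy

lemma eventually_nhdsLT_lt_of_deriv_neg (hf : deriv f x < 0) : ∀ᶠ y in 𝓝[<] x, f x < f y := by
  have hsign := eventually_nhdsWithin_sign_eq_of_deriv_neg (f := fun y => f y - f x) (x₀ := x)
    (by simpa only [deriv_sub_const_fun] using hf) (sub_self _)
  filter_upwards [hsign.filter_mono nhdsWithin_le_nhds, self_mem_nhdsWithin] with y hy (hyx : y < x)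
  rwa [sign_pos (sub_pos.2 hyx), sign_eq_one_iff, sub_pos] at hy

lemma deriv_nonneg_of_isLocalMaxOn_Iio (hf : IsLocalMaxOn f (Iio x) x) : 0 ≤ deriv f x := by
  by_contra! hneg
  obtain ⟨y, hyx, hxy⟩ := (hf.and (eventually_nhdsLT_lt_of_deriv_neg hneg)).exists
  exact hyx.not_gt hxy

lemma not_isLocalMaxOn_sub_mul_of_lt_deriv (hf : ContinuousWithinAt f (Ici x) x)
    (hdiff : ∀ᶠ y in 𝓝[>] x, DifferentiableAt ℝ f y) (hderiv : ∀ᶠ y in 𝓝[>] x, k < deriv f y) :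
    ¬ IsLocalMaxOn (fun y => f y - k * y) (Ioi x) x := by
  intro hmax
  obtain ⟨c, hxc, hc⟩ := (nhdsGT_basis x).eventually_iff.1 (hdiff.and hderiv)
  obtain ⟨y, hyx, hxy, hyc⟩ := (hmax.and (Ioo_mem_nhdsGT hxc)).exists
  have hint : ∀ z ∈ interior (Icc x y), DifferentiableAt ℝ f z ∧ k < deriv f z := by
    rw [interior_Icc]
    exact fun z hz => hc ⟨hz.1, hz.2.trans hyc⟩
  have hcont : ContinuousOn f (Icc x y) := by
    rintro z ⟨hxz, hzy⟩
    rcases hxz.eq_or_lt with rfl | hxz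
    · exact hf.mono Icc_subset_Ici_self
    · exact (hc ⟨hxz, hzy.trans_lt hyc⟩).1.continuousAt.continuousWithinAt
  have hslope : k * (y - x) < f y - f x :=
    (convex_Icc x y).mul_sub_lt_image_sub_of_lt_deriv hcont
      (fun z hz => (hint z hz).1.differentiableWithinAt) (fun z hz => (hint z hz).2)
      x (left_mem_Icc.2 hxy.le) y (right_mem_Icc.2 hxy.le) hxy
  linarith

lemma deriv_comp_deriv_nonpos_of_isLocalMax (hf : ContDiffAt ℝ 1 f x) (hΦ : MonotoneOn Φ s)
    (hs : s ∈ 𝓝 k) (hmax : IsLocalMax (fun y => f y - k * y) x) :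
    deriv (fun y => Φ (deriv f y)) x ≤ 0 := by
  have hdiff : ∀ᶠ y in 𝓝 x, DifferentiableAt ℝ f y :=
    (hf.eventually (by simp)).mono fun y hy => hy.differentiableAt one_ne_zero
  have hk : deriv f x = k := by
    have hd := hdiff.self_of_nhds.hasDerivAt.fun_sub ((hasDerivAt_id x).const_mul k)
    simpa only [mul_one, sub_eq_zero] using hmax.hasDerivAt_eq_zero hd
  have hmem : ∀ᶠ y in 𝓝 x, deriv f y ∈ s := by
    have hcont : ContinuousAt (deriv f) x := (hf.derivWithin (m := 0) (zero_add 1).le).continuousAt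
    exact hcont.eventually_mem (hk ▸ hs)
  -- If `Φ ∘ f'` increased at `x`, monotonicity of `Φ` would force `f' > k` just to the right of
  -- `x`, so that `f - k * id` would increase there.
  by_contra! hpos
  have hlt : ∀ᶠ y in 𝓝[>] x, k < deriv f y := by
    filter_upwards [eventually_nhdsGT_lt_of_deriv_pos hpos,
      hmem.filter_mono nhdsWithin_le_nhds] with y hy hys
    exact hk ▸ hΦ.reflect_lt hmem.self_of_nhds hys hy
  exact not_isLocalMaxOn_sub_mul_of_lt_deriv hf.continuousAt.continuousWithinAt
    (hdiff.filter_mono nhdsWithin_le_nhds) hlt (hmax.on _)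

end OneVariable

/-- The closed region between the graphs of `l` and `r` over `S`, on whose part over a compact time
interval the maximum principle is applied. The parameter of the graphs is the second coordinate, to
match the `(x, t)` convention of `typeIIDomain`. -/
def closedStrip {X : Type*} (l r : X → ℝ) (S : Set X) : Set (ℝ × X) :=
  {p | p.2 ∈ S ∧ p.1 ∈ Icc (l p.2) (r p.2)}

section GraphGaps

variable {X : Type*} [TopologicalSpace X] {l r : X → ℝ} {S : Set X}

lemma continuousOn_graph_gaps (hl : ContinuousOn l S) (hr : ContinuousOn r S) :
    ContinuousOn (fun p : ℝ × X => (p.1 - l p.2, r p.2 - p.1)) (Prod.snd ⁻¹' S) :=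
  (continuousOn_fst.sub (hl.comp continuousOn_snd (mapsTo_preimage _ _))).prodMk
    ((hr.comp continuousOn_snd (mapsTo_preimage _ _)).sub continuousOn_fst)

lemma isClosed_closedStrip (hS : IsClosed S) (hl : ContinuousOn l S) (hr : ContinuousOn r S) :
    IsClosed (closedStrip l r S) := by
  convert (continuousOn_graph_gaps hl hr).preimage_isClosed_of_isClosed
    (hS.preimage continuous_snd)
    ((isClosed_Ici (a := 0)).prod (isClosed_Ici (a := 0))) using 1
  ext p
  simp only [closedStrip, mem_ofPred_eq, mem_inter_iff, mem_preimage, mem_prod, mem_Icc, mem_Ici,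
    sub_nonneg]

lemma isCompact_closedStrip [T2Space X] (hS : IsCompact S) (hl : ContinuousOn l S)
    (hr : ContinuousOn r S) : IsCompact (closedStrip l r S) := by
  obtain ⟨m, hm⟩ := hS.bddBelow_image hl
  obtain ⟨M, hM⟩ := hS.bddAbove_image hr
  refine (isCompact_Icc (a := m) (b := M)).prod hS |>.of_isClosed_subset
    (isClosed_closedStrip hS.isClosed hl hr) fun p hp => ⟨⟨?_, ?_⟩, hp.1⟩
  · exact (hm (mem_image_of_mem l hp.1)).trans hp.2.1
  · exact hp.2.2.trans (hM (mem_image_of_mem r hp.1))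

end GraphGaps

/-- The open time interval `(0, T)` on which a Type II solution lives, as a set of reals since `T`
may be infinite. -/
def timeInterval (T : EReal) : Set ℝ :=
  {t | 0 < t ∧ (t : EReal) < T}

lemma isOpen_timeInterval (T : EReal) : IsOpen (timeInterval T) :=
  isOpen_Ioi.inter (isOpen_Iio.preimage continuous_coe_real_ereal)

lemma Icc_subset_timeInterval {T : EReal} {t₁ t₂ : ℝ} (h₁ : t₁ ∈ timeInterval T)
    (h₂ : t₂ ∈ timeInterval T) : Icc t₁ t₂ ⊆ timeInterval T := fun _ ht =>
  ⟨h₁.1.trans_le ht.1, (EReal.coe_le_coe_iff.2 ht.2).trans_lt h₂.2⟩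

lemma isOpen_typeIIDomain {T : EReal} {l r : ℝ → ℝ} (hl : ContinuousOn l (timeInterval T))
    (hr : ContinuousOn r (timeInterval T)) : IsOpen (typeIIDomain T l r) := by
  convert (continuousOn_graph_gaps hl hr).isOpen_inter_preimage
    ((isOpen_timeInterval T).preimage continuous_snd)
    ((isOpen_Ioi (a := 0)).prod (isOpen_Ioi (a := 0))) using 1
  ext p
  simp only [typeIIDomain, timeInterval, mem_ofPred_eq, mem_inter_iff, mem_preimage, mem_prod,
    mem_Ioi, sub_pos, and_assoc]

namespace IsTypeIISolution

variable {Φ : ℝ → ℝ} {T : EReal} {a b : ℝ} {u₀ : ℝ → ℝ} {u : ℝ → ℝ → ℝ} {l r : ℝ → ℝ}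
  {t₁ t₂ c d k x t : ℝ}

lemma continuousOn_left (h : IsTypeIISolution Φ T a b u₀ u l r) :
    ContinuousOn l (timeInterval T) :=
  h.l_cont.mono fun _ ht => ⟨ht.1.le, ht.2⟩

lemma continuousOn_right (h : IsTypeIISolution Φ T a b u₀ u l r) :
    ContinuousOn r (timeInterval T) :=
  h.r_cont.mono fun _ ht => ⟨ht.1.le, ht.2⟩

lemma domain_mem_nhds (h : IsTypeIISolution Φ T a b u₀ u l r)
    (hxt : (x, t) ∈ typeIIDomain T l r) : typeIIDomain T l r ∈ 𝓝 (x, t) :=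
  (isOpen_typeIIDomain h.continuousOn_left h.continuousOn_right).mem_nhds hxt

lemma contDiffAt_space (h : IsTypeIISolution Φ T a b u₀ u l r)
    (hxt : (x, t) ∈ typeIIDomain T l r) : ContDiffAt ℝ 1 (fun y => u y t) x :=
  ContDiffAt.comp (f := fun y : ℝ => (y, t)) x
    ((h.u_smooth.contDiffAt (h.domain_mem_nhds hxt)).of_le (mod_cast le_top)) (by fun_prop)

lemma differentiableAt_time (h : IsTypeIISolution Φ T a b u₀ u l r)
    (hxt : (x, t) ∈ typeIIDomain T l r) : DifferentiableAt ℝ (fun s => u x s) t :=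
  DifferentiableAt.comp (f := fun s : ℝ => (x, s)) t
    ((h.u_smooth.contDiffAt (h.domain_mem_nhds hxt)).differentiableAt (by simp)) (by fun_prop)

lemma closedStrip_subset_closure (h : IsTypeIISolution Φ T a b u₀ u l r) :
    closedStrip l r (timeInterval T) ⊆ closure (typeIIDomain T l r) := by
  rintro ⟨x, t⟩ ⟨ht, hx⟩
  rw [← closure_Ioo (h.l_lt_r t ht.1 ht.2).ne] at hx
  exact map_mem_closure (f := fun y : ℝ => (y, t)) (by fun_prop) hx
    fun y hy => ⟨ht.1, ht.2, hy.1, hy.2⟩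

lemma continuousOn_closedStrip (h : IsTypeIISolution Φ T a b u₀ u l r)
    {S : Set ℝ} (hS : S ⊆ timeInterval T) :
    ContinuousOn (fun p : ℝ × ℝ => u p.1 p.2) (closedStrip l r S) :=
  h.u_cont.mono fun _ hp => h.closedStrip_subset_closure ⟨hS hp.1, hp.2⟩

lemma continuousOn_slice (h : IsTypeIISolution Φ T a b u₀ u l r) (ht : t ∈ timeInterval T) :
    ContinuousOn (fun y => u y t) (Icc (l t) (r t)) :=
  (h.continuousOn_closedStrip Subset.rfl).comp (f := fun y : ℝ => (y, t)) (by fun_prop)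
    fun _ hy => ⟨ht, hy⟩

lemma not_isLocalMaxOn_sub_mul_left (h : IsTypeIISolution Φ T a b u₀ u l r)
    (ht : t ∈ timeInterval T) : ¬ IsLocalMaxOn (fun y => u y t - k * y) (Ioi (l t)) (l t) := by
  have hlr : l t < r t := h.l_lt_r t ht.1 ht.2
  refine not_isLocalMaxOn_sub_mul_of_lt_deriv ?_ ?_
    ((h.grad_left t ht.1 ht.2).eventually_gt_atTop k)
  · exact (h.continuousOn_slice ht _ (left_mem_Icc.2 hlr.le)).mono_of_mem_nhdsWithin
      (Icc_mem_nhdsGE hlr)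
  · filter_upwards [Ioo_mem_nhdsGT hlr] with y hy
    exact (h.contDiffAt_space ⟨ht.1, ht.2, hy.1, hy.2⟩).differentiableAt one_ne_zero

lemma not_isLocalMaxOn_sub_time (h : IsTypeIISolution Φ T a b u₀ u l r)
    (hΦ : MonotoneOn Φ (Ioi 0)) (hk : 0 < k) (hxt : (x, t) ∈ typeIIDomain T l r)
    (hspace : IsLocalMax (fun y => u y t - k * y) x) :
    ¬ IsLocalMaxOn (fun s => u x s - s) (Iio t) t := by
  intro htime
  have hdiffusion : deriv (fun y => Φ (deriv (fun z => u z t) y)) x ≤ 0 :=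
    deriv_comp_deriv_nonpos_of_isLocalMax (h.contDiffAt_space hxt) hΦ (Ioi_mem_nhds hk) hspace
  have hspeed : 0 ≤ deriv (fun s => u x s - s) t := deriv_nonneg_of_isLocalMaxOn_Iio htime
  rw [deriv_fun_sub (h.differentiableAt_time hxt) differentiableAt_fun_id, deriv_id'',
    h.pde x t hxt] at hspeed
  linarith

lemma eq_initial_or_eq_right_of_isMaxOn (h : IsTypeIISolution Φ T a b u₀ u l r)
    (hΦ : MonotoneOn Φ (Ioi 0)) (hI : Icc t₁ t₂ ⊆ timeInterval T) (hk : 0 < k)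
    (hxt : (x, t) ∈ closedStrip l r (Icc t₁ t₂))
    (hmax : IsMaxOn (fun p : ℝ × ℝ => u p.1 p.2 - (k * p.1 + p.2))
      (closedStrip l r (Icc t₁ t₂)) (x, t)) :
    t = t₁ ∨ x = r t := by
  obtain ⟨ht, hlx, hxr⟩ := hxt
  simp only at ht hlx hxr
  have hle : ∀ {y s}, (y, s) ∈ closedStrip l r (Icc t₁ t₂) →
      u y s - (k * y + s) ≤ u x t - (k * x + t) := fun hys => hmax hys
  by_contra! hne
  have ht₁ : t₁ < t := ht.1.lt_of_ne' hne.1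
  have hxr : x < r t := hxr.lt_of_ne hne.2
  have hlx : l t < x := by
    refine hlx.lt_of_ne ?_
    rintro rfl
    refine h.not_isLocalMaxOn_sub_mul_left (k := k) (hI ht) ?_
    filter_upwards [Ioo_mem_nhdsGT hxr] with y hy
    linarith [hle ⟨ht, hy.1.le, hy.2.le⟩]
  have hdom : (x, t) ∈ typeIIDomain T l r := ⟨(hI ht).1, (hI ht).2, hlx, hxr⟩
  refine h.not_isLocalMaxOn_sub_time hΦ hk hdom ?_ ?_
  · filter_upwards [Ioo_mem_nhds hlx hxr] with y hy
    linarith [hle ⟨ht, hy.1.le, hy.2.le⟩]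
  · have hvert : ∀ᶠ s in 𝓝 t, (x, s) ∈ typeIIDomain T l r :=
      (Continuous.prodMk_right x).continuousAt.eventually_mem (h.domain_mem_nhds hdom)
    filter_upwards [hvert.filter_mono nhdsWithin_le_nhds, Ioo_mem_nhdsLT ht₁] with s hs hst
    linarith [hle ⟨⟨hst.1.le, hst.2.le.trans ht.2⟩, hs.2.2.1.le, hs.2.2.2.le⟩]

lemma le_moving_line (h : IsTypeIISolution Φ T a b u₀ u l r)
    (hΦ : MonotoneOn Φ (Ioi 0)) (hI : Icc t₁ t₂ ⊆ timeInterval T) (hk : 0 < k)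
    (hinit : ∀ y ∈ Icc (l t₁) (r t₁), u y t₁ ≤ k * (y - c))
    (hright : ∀ s ∈ Icc t₁ t₂, 1 ≤ k * (r s - c))
    (hxt : (x, t) ∈ closedStrip l r (Icc t₁ t₂)) :
    u x t ≤ k * (x - c) + (t - t₁) := by
  have hK : IsCompact (closedStrip l r (Icc t₁ t₂)) :=
    isCompact_closedStrip isCompact_Icc (h.continuousOn_left.mono hI) (h.continuousOn_right.mono hI)
  have hv : ContinuousOn (fun p : ℝ × ℝ => u p.1 p.2 - (k * p.1 + p.2))
      (closedStrip l r (Icc t₁ t₂)) := (h.continuousOn_closedStrip hI).sub (by fun_prop)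
  obtain ⟨⟨y, s⟩, hys, hmax⟩ := hK.exists_isMaxOn ⟨_, hxt⟩ hv
  have hs : s ∈ Icc t₁ t₂ := hys.1
  have hmax_le : u x t - (k * x + t) ≤ u y s - (k * y + s) := hmax hxt
  have hline : u y s ≤ k * (y - c) + (s - t₁) := by
    rcases h.eq_initial_or_eq_right_of_isMaxOn hΦ hI hk hys hmax with rfl | rfl
    · linarith [hinit y hys.2]
    · linarith [h.bdry_right s (hI hs).1 (hI hs).2, hright s hs, hs.1]
  linarith

lemma min_le_left_interface (h : IsTypeIISolution Φ T a b u₀ u l r)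
    (hΦ : MonotoneOn Φ (Ioi 0)) (hI : Icc t₁ t₂ ⊆ timeInterval T)
    (hd : ∀ s ∈ Icc t₁ t₂, d ≤ r s) (ht : t ∈ Icc t₁ t₂) :
    min (l t₁) d ≤ l t := by
  refine le_of_forall_lt_imp_le_of_dense fun c hc => ?_
  obtain ⟨hcl, hcd⟩ := lt_min_iff.1 hc
  have ht₁ : t₁ ∈ Icc t₁ t₂ := left_mem_Icc.2 (ht.1.trans ht.2)
  obtain ⟨M, hM⟩ := isCompact_Icc.bddAbove_image (h.continuousOn_slice (hI ht₁))
  have hsteep : ∀ {m : ℝ} (A : ℝ), 0 < m → ∀ᶠ k in atTop, A < k * m := fun A hm =>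
    (tendsto_id.atTop_mul_const hm).eventually_gt_atTop A
  by_contra! hlt
  obtain ⟨k, hk, hkM, hkd, hkt⟩ := ((eventually_gt_atTop 0).and <|
    (hsteep M (sub_pos.2 hcl)).and <| (hsteep 1 (sub_pos.2 hcd)).and <|
      hsteep (t - t₁) (sub_pos.2 hlt)).exists
  have hfoot : u (l t) t ≤ k * (l t - c) + (t - t₁) := by
    refine h.le_moving_line hΦ hI hk (fun y hy => ?_) (fun s hs => ?_)
      ⟨ht, left_mem_Icc.2 (h.l_lt_r t (hI ht).1 (hI ht).2).le⟩
    · calc u y t₁ ≤ M := hM (mem_image_of_mem _ hy)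
        _ ≤ k * (l t₁ - c) := hkM.le
        _ ≤ k * (y - c) := by gcongr; exact hy.1
    · calc 1 ≤ k * (d - c) := hkd.le
        _ ≤ k * (r s - c) := by gcongr; exact hd s hs
  linarith [h.bdry_left t (hI ht).1 (hI ht).2]

lemma monotoneOn_left (h : IsTypeIISolution Φ T a b u₀ u l r) (hΦ : MonotoneOn Φ (Ioi 0)) :
    MonotoneOn l (timeInterval T) := by
  intro t₁ h₁ t₂ h₂ h₁₂
  have hI : Icc t₁ t₂ ⊆ timeInterval T := Icc_subset_timeInterval h₁ h₂
  have hne : (Icc t₁ t₂).Nonempty := nonempty_Icc.2 h₁₂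
  obtain ⟨τ, hτ, hτmin⟩ := isCompact_Icc.exists_isMinOn hne (h.continuousOn_left.mono hI)
  obtain ⟨σ, hσ, hσmin⟩ := isCompact_Icc.exists_isMinOn hne (h.continuousOn_right.mono hI)
  have hτσ : l τ < r σ := (hτmin hσ).trans_lt (h.l_lt_r σ (hI hσ).1 (hI hσ).2)
  have hmin : min (l t₁) (r σ) ≤ l τ := h.min_le_left_interface hΦ hI hσmin hτ
  exact ((min_le_iff.1 hmin).resolve_right hτσ.not_ge).trans (hτmin (right_mem_Icc.2 h₁₂))

lemma initial_le_left (h : IsTypeIISolution Φ T a b u₀ u l r) (hΦ : MonotoneOn Φ (Ioi 0))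
    (ht : t ∈ timeInterval T) : a ≤ l t := by
  have hzero : 0 ∈ closure (timeInterval T) := by
    refine closure_mono (?_ : Ioo 0 t ⊆ timeInterval T) ?_
    · exact fun s hs => ⟨hs.1, (EReal.coe_lt_coe_iff.2 hs.2).trans ht.2⟩
    · exact closure_Ioo ht.1.ne ▸ left_mem_Icc.2 ht.1.le
  have hcont : ContinuousWithinAt l (timeInterval T) 0 :=
    (h.l_cont 0 ⟨le_rfl, h.T_pos⟩).mono fun _ hs => ⟨hs.1.le, hs.2⟩
  have hmono : MonotoneOn l (insert 0 (timeInterval T)) :=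
    (h.monotoneOn_left hΦ).insert_of_continuousWithinAt (mem_closure_iff_clusterPt.1 hzero) hcont
  exact h.l_init ▸ hmono (mem_insert _ _) (mem_insert_of_mem _ ht) ht.1.le

lemma reflect (h : IsTypeIISolution Φ T a b u₀ u l r) :
    IsTypeIISolution Φ T (-b) (-a) (fun x => 1 - u₀ (-x)) (fun x t => 1 - u (-x) t)
      (fun t => -r t) (fun t => -l t) := by
  have hmaps : MapsTo (fun p : ℝ × ℝ => (-p.1, p.2))
      (typeIIDomain T (fun t => -r t) (fun t => -l t)) (typeIIDomain T l r) :=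
    fun p hp => ⟨hp.1, hp.2.1, lt_neg.1 hp.2.2.2, neg_lt.1 hp.2.2.1⟩
  have hderiv : ∀ t y : ℝ, deriv (fun z => 1 - u (-z) t) y = deriv (fun z => u z t) (-y) := by
    intro t y
    rw [deriv_const_sub, deriv_comp_neg (fun z => u z t) y, neg_neg]
  exact {
    T_pos := h.T_pos
    l_init := congrArg Neg.neg h.r_init
    r_init := congrArg Neg.neg h.l_init
    l_lt_r := fun t h₀ hT => neg_lt_neg (h.l_lt_r t h₀ hT)
    l_cont := h.r_cont.neg
    r_cont := h.l_cont.neg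
    u_cont := continuousOn_const.sub (h.u_cont.comp (by fun_prop) (hmaps.closure (by fun_prop)))
    u_smooth := contDiffOn_const.sub (h.u_smooth.comp (by fun_prop) hmaps)
    pde := fun x t hxt => by
      simp only [hderiv]
      rw [deriv_const_sub, h.pde (-x) t (hmaps hxt),
        deriv_comp_neg (fun y => Φ (deriv (fun z => u z t) y)) x]
    init := fun x hbx hxa => by rw [h.init (-x) (le_neg.1 hxa) (neg_le.1 hbx)]
    bdry_left := fun t h₀ hT => by rw [neg_neg, h.bdry_right t h₀ hT, sub_self]
    bdry_right := fun t h₀ hT => by rw [neg_neg, h.bdry_left t h₀ hT, sub_zero]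
    grad_left := fun t h₀ hT => by
      simp only [hderiv]
      exact (h.grad_right t h₀ hT).comp (by simpa using tendsto_neg_nhdsGT (a := -r t))
    grad_right := fun t h₀ hT => by
      simp only [hderiv]
      exact (h.grad_left t h₀ hT).comp (by simpa using tendsto_neg_nhdsLT (a := -l t)) }

end IsTypeIISolution

theorem typeII_interfaces_monotone_general
    (Φ : ℝ → ℝ) (hΦ : MonotoneOn Φ (Ioi 0))
    (T : EReal) (a b : ℝ) (u₀ : ℝ → ℝ) (u : ℝ → ℝ → ℝ) (l r : ℝ → ℝ)
    (h : IsTypeIISolution Φ T a b u₀ u l r) :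
    MonotoneOn l {t : ℝ | 0 < t ∧ (t : EReal) < T} ∧
    AntitoneOn r {t : ℝ | 0 < t ∧ (t : EReal) < T} ∧
    ∀ t : ℝ, 0 < t → (t : EReal) < T → a ≤ l t ∧ r t ≤ b :=
  ⟨h.monotoneOn_left hΦ,
    fun _ hs _ ht hst => neg_le_neg_iff.1 (h.reflect.monotoneOn_left hΦ hs ht hst),
    fun _ h₀ hT => ⟨h.initial_le_left hΦ ⟨h₀, hT⟩,
      neg_le_neg_iff.1 (h.reflect.initial_le_left hΦ ⟨h₀, hT⟩)⟩⟩

/-- Corollary in Section 7 of Barenblatt–Vázquez.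
For any Type II solution `(u,l,r)` of `u_t = (Φ(u_x))_x` with initial data
`u₀ : [a,b] → ℝ`, the interfaces are monotone: `l` is nondecreasing and `r` is
nonincreasing on `(0,T)`; in particular `l(t) ≥ a` and `r(t) ≤ b` for all `t`. -/
theorem typeII_interfaces_monotone
    (Φ : ℝ → ℝ) (hΦsmooth : ContDiffOn ℝ (⊤ : ℕ∞) Φ (Ioi 0))
    (hΦ' : ∀ s : ℝ, 0 < s → 0 < deriv Φ s)
    (hPhiInf : ∃ L : ℝ, Tendsto Φ atTop (𝓝 L))
    (T : EReal) (a b : ℝ) (u₀ : ℝ → ℝ) (u : ℝ → ℝ → ℝ) (l r : ℝ → ℝ)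
    (h : IsTypeIISolution Φ T a b u₀ u l r) :
    MonotoneOn l {t : ℝ | 0 < t ∧ (t : EReal) < T} ∧
    AntitoneOn r {t : ℝ | 0 < t ∧ (t : EReal) < T} ∧
    ∀ t : ℝ, 0 < t → (t : EReal) < T → a ≤ l t ∧ r t ≤ b := by
  exact typeII_interfaces_monotone_general Φ
    (strictMonoOn_of_deriv_pos (convex_Ioi 0) hΦsmooth.continuousOn
      (by simpa only [interior_Ioi, mem_Ioi] using hΦ')).monotoneOn T a b u₀ u l r h
end

section
/- Let Φ : (0,∞) → ℝ be C^∞ with Φ'(s) > 0 for all s > 0, let Ω = I × J with I, J open intervals, and let u : Ω → ℝ be a C^∞ solution of ∂_t u = ∂ₓ(Φ(∂ₓu)) with ∂ₓu > 0 on Ω, with inverse profiles X(·,t) satisfying u(X(p,t),t) = p. Define w(p,t) = ∂_p X(p,t) and v(x,t) = ∂ₓu(x,t). Then w satisfies the differentiated conjugate equation ∂_t w = ∂_p²(Ψ(w)), where Ψ(s) = −Φ(1/s), and the Bäcklund relation v(x,t) · w(u(x,t),t) = 1 holds for all (x,t) ∈ Ω. -/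
open Set Filter Topology

/-!
The hodograph map `(x, t) ↦ (u(x, t), t)` is a local diffeomorphism wherever `∂ₓu ≠ 0`, and
`(p, t) ↦ (X(p, t), t)` is its inverse, so `X` is as smooth as `u`, with `X_p = 1 / u_x` and
`X_t = -u_t / u_x` at `p = u(x, t)`. The first formula is the Bäcklund relation. It also gives
`Ψ(X_p) = -Φ(u_x)`, and differentiating this in `p` at fixed `t` yields
`(Ψ(X_p))_p = -(Φ(u_x))_x / u_x = -u_t / u_x = X_t`, the conjugate equation. One more
differentiation in `p`, with `X_{pt} = X_{tp}`, gives the equation for `w = X_p`.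
-/

section PartialDerivatives

variable {𝕜 E F : Type*} [NontriviallyNormedField 𝕜] [NormedAddCommGroup E] [NormedSpace 𝕜 E]
  [NormedAddCommGroup F] [NormedSpace 𝕜 F]

lemma hasDerivAt_comp_prodMk_left {f : 𝕜 × E → F} {f' : 𝕜 × E →L[𝕜] F} {x : 𝕜} {y : E}
    (hf : HasFDerivAt f f' (x, y)) : HasDerivAt (fun z => f (z, y)) (f' (1, 0)) x :=
  hf.comp_hasDerivAt x ((hasDerivAt_id x).prodMk (hasDerivAt_const x y))

lemma hasDerivAt_comp_prodMk_right {f : E × 𝕜 → F} {f' : E × 𝕜 →L[𝕜] F} {x : E} {t : 𝕜}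
    (hf : HasFDerivAt f f' (x, t)) : HasDerivAt (fun s => f (x, s)) (f' (0, 1)) t :=
  hf.comp_hasDerivAt t ((hasDerivAt_const t x).prodMk (hasDerivAt_id t))

lemma deriv_deriv_comm_of_contDiffAt {f : 𝕜 × 𝕜 → F} {x t : 𝕜} {n : WithTop ℕ∞}
    (hf : ContDiffAt 𝕜 n f (x, t)) (hn : minSmoothness 𝕜 2 ≤ n) :
    deriv (fun s => deriv (fun z => f (z, s)) x) t =
      deriv (fun z => deriv (fun s => f (z, s)) t) x := by
  have hf2 : ContDiffAt 𝕜 2 f (x, t) := hf.of_le (le_minSmoothness.trans hn)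
  have hdiff : ∀ᶠ z in 𝓝 (x, t), DifferentiableAt 𝕜 f z :=
    (hf2.eventually (by simp)).mono fun z hz => hz.differentiableAt (by simp)
  have hf'' : HasFDerivAt (fderiv 𝕜 f) (fderiv 𝕜 (fderiv 𝕜 f) (x, t)) (x, t) :=
    ((hf2.fderiv_right (m := 1) (by norm_num)).differentiableAt (by simp)).hasFDerivAt
  have hleft : (fun s => deriv (fun z => f (z, s)) x) =ᶠ[𝓝 t] fun s => fderiv 𝕜 f (x, s) (1, 0) :=
    ((Continuous.prodMk_right x).continuousAt.eventually hdiff).mono fun s hs =>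
      (hasDerivAt_comp_prodMk_left hs.hasFDerivAt).deriv
  have hright : (fun z => deriv (fun s => f (z, s)) t) =ᶠ[𝓝 x] fun z => fderiv 𝕜 f (z, t) (0, 1) :=
    ((Continuous.prodMk_left t).continuousAt.eventually hdiff).mono fun z hz =>
      (hasDerivAt_comp_prodMk_right hz.hasFDerivAt).deriv
  calc deriv (fun s => deriv (fun z => f (z, s)) x) t
      = fderiv 𝕜 (fderiv 𝕜 f) (x, t) (0, 1) (1, 0) := by
        rw [hleft.deriv_eq]
        simpa using ((hasDerivAt_comp_prodMk_right hf'').clm_apply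
          (hasDerivAt_const t ((1, 0) : 𝕜 × 𝕜))).deriv
    _ = fderiv 𝕜 (fderiv 𝕜 f) (x, t) (1, 0) (0, 1) := hf.isSymmSndFDerivAt hn _ _
    _ = deriv (fun z => deriv (fun s => f (z, s)) t) x := by
        rw [hright.deriv_eq]
        simpa using ((hasDerivAt_comp_prodMk_left hf'').clm_apply
          (hasDerivAt_const x ((0, 1) : 𝕜 × 𝕜))).deriv.symm

end PartialDerivatives

lemma contDiffAt_of_eventually_leftInverse {𝕜 E F : Type*} [RCLike 𝕜]
    [NormedAddCommGroup E] [NormedSpace 𝕜 E] [CompleteSpace E]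
    [NormedAddCommGroup F] [NormedSpace 𝕜 F] {f : E → F} {g : F → E} {f' : E ≃L[𝕜] F} {a : E}
    {n : WithTop ℕ∞} (hf : ContDiffAt 𝕜 n f a) (hf' : HasFDerivAt f (f' : E →L[𝕜] F) a)
    (hn : n ≠ 0) (hg : ∀ᶠ x in 𝓝 a, g (f x) = x) : ContDiffAt 𝕜 n g (f a) :=
  (hf.to_localInverse hf' hn).congr_of_eventuallyEq
    ((hf.hasStrictFDerivAt' hf' hn).localInverse_unique hg)

section Hodograph

/-- The hodograph map `(x, t) ↦ (u(x, t), t)`, which exchanges the spatial variable `x` for the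
value of `u`; the hodograph map of the family of inverse profiles inverts it. -/
def hodograph {α β γ : Type*} (u : α → β → γ) (z : α × β) : γ × β :=
  (u z.1 z.2, z.2)

lemma eventually_hodograph_hodograph_eq {α β γ : Type*} {l : Filter (α × β)} {u : α → β → γ}
    {X : γ → β → α} (hX : ∀ᶠ z in l, X (u z.1 z.2) z.2 = z.1) :
    ∀ᶠ z in l, hodograph X (hodograph u z) = z :=
  hX.mono fun _ hz => Prod.ext hz rfl

section Derivative

variable {𝕜 E : Type*} [NontriviallyNormedField 𝕜] [NormedAddCommGroup E] [NormedSpace 𝕜 E]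

lemma apply_prodMk_eq_mul_add (u' : 𝕜 × E →L[𝕜] 𝕜) (h : 𝕜) (k : E) :
    u' (h, k) = h * u' (1, 0) + u' (0, k) := by
  rw [← smul_eq_mul, ← map_smul, ← map_add]
  simp

/-- The derivative `(h, k) ↦ (u' (h, k), k)` of the hodograph map of a function with derivative
`u'`, as an equivalence; the inverse solves `p = h * u' (1, 0) + u' (0, k)` for `h`. -/
noncomputable def hodographEquiv (u' : 𝕜 × E →L[𝕜] 𝕜) (hu' : u' (1, 0) ≠ 0) :
    (𝕜 × E) ≃L[𝕜] 𝕜 × E :=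
  .equivOfInverse (u'.prod (.snd 𝕜 𝕜 E))
    (((u' (1, 0))⁻¹ • (.fst 𝕜 𝕜 E - u' ∘L .inr 𝕜 𝕜 E ∘L .snd 𝕜 𝕜 E)).prod (.snd 𝕜 𝕜 E))
    (fun ⟨h, k⟩ => by
      ext
      · suffices (u' (1, 0))⁻¹ * (u' (h, k) - u' (0, k)) = h by simpa
        rw [apply_prodMk_eq_mul_add u' h k, add_sub_cancel_right, mul_comm,
          mul_inv_cancel_right₀ hu']
      · simp)
    (fun ⟨p, k⟩ => by
      ext
      · suffices u' ((u' (1, 0))⁻¹ * (p - u' (0, k)), k) = p by simpa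
        rw [apply_prodMk_eq_mul_add, mul_right_comm, inv_mul_cancel₀ hu', one_mul, sub_add_cancel]
      · simp)

variable {u X : 𝕜 → E → 𝕜} {u' : 𝕜 × E →L[𝕜] 𝕜} {x : 𝕜} {t : E}

lemma hasStrictFDerivAt_hodograph (hu : HasStrictFDerivAt u.uncurry u' (x, t))
    (hu' : u' (1, 0) ≠ 0) :
    HasStrictFDerivAt (hodograph u) (hodographEquiv u' hu' : 𝕜 × E →L[𝕜] 𝕜 × E) (x, t) :=
  hu.prodMk hasStrictFDerivAt_snd

lemma hasStrictFDerivAt_inverseProfile [CompleteSpace 𝕜] [CompleteSpace E]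
    (hu : HasStrictFDerivAt u.uncurry u' (x, t)) (hu' : u' (1, 0) ≠ 0)
    (hX : ∀ᶠ z in 𝓝 (x, t), X (u z.1 z.2) z.2 = z.1) :
    HasStrictFDerivAt X.uncurry
      ((u' (1, 0))⁻¹ • (.fst 𝕜 𝕜 E - u' ∘L .inr 𝕜 𝕜 E ∘L .snd 𝕜 𝕜 E)) (u x t, t) :=
  ((hasStrictFDerivAt_hodograph hu hu').to_local_left_inverse
    (eventually_hodograph_hodograph_eq hX)).fst

end Derivative

lemma contDiffAt_inverseProfile {𝕜 E : Type*} [RCLike 𝕜] [NormedAddCommGroup E] [NormedSpace 𝕜 E]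
    [CompleteSpace E] {u X : 𝕜 → E → 𝕜} {x : 𝕜} {t : E} {n : WithTop ℕ∞}
    (hu : ContDiffAt 𝕜 n u.uncurry (x, t)) (hn : n ≠ 0) (hux : deriv (fun z => u z t) x ≠ 0)
    (hX : ∀ᶠ z in 𝓝 (x, t), X (u z.1 z.2) z.2 = z.1) :
    ContDiffAt 𝕜 n X.uncurry (u x t, t) := by
  have hu_strict := hu.hasStrictFDerivAt hn
  have hu_x : HasDerivAt (fun z => u z t) _ x :=
    hasDerivAt_comp_prodMk_left hu_strict.hasFDerivAt
  have hinv : ContDiffAt 𝕜 n (hodograph X) (hodograph u (x, t)) :=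
    contDiffAt_of_eventually_leftInverse (hu.prodMk contDiffAt_snd)
      (hasStrictFDerivAt_hodograph hu_strict (hu_x.deriv ▸ hux)).hasFDerivAt hn
      (eventually_hodograph_hodograph_eq hX)
  exact hinv.fst

lemma deriv_inverseProfile_time {𝕜 : Type*} [NontriviallyNormedField 𝕜] [CompleteSpace 𝕜]
    {u X : 𝕜 → 𝕜 → 𝕜} {u' : 𝕜 × 𝕜 →L[𝕜] 𝕜} {x t : 𝕜}
    (hu : HasStrictFDerivAt u.uncurry u' (x, t)) (hux : deriv (fun z => u z t) x ≠ 0)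
    (hX : ∀ᶠ z in 𝓝 (x, t), X (u z.1 z.2) z.2 = z.1) :
    deriv (fun s => X (u x t) s) t = -deriv (fun s => u x s) t / deriv (fun z => u z t) x := by
  have hu_x : HasDerivAt (fun z => u z t) (u' (1, 0)) x :=
    hasDerivAt_comp_prodMk_left hu.hasFDerivAt
  have hu_t : HasDerivAt (fun s => u x s) (u' (0, 1)) t :=
    hasDerivAt_comp_prodMk_right hu.hasFDerivAt
  have hX_strict := hasStrictFDerivAt_inverseProfile hu (hu_x.deriv ▸ hux) hX
  have hX_t : HasDerivAt (fun s => X (u x t) s) _ t :=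
    hasDerivAt_comp_prodMk_right hX_strict.hasFDerivAt
  rw [hX_t.deriv, hu_x.deriv, hu_t.deriv]
  simp [div_eq_inv_mul]

end Hodograph

section ConjugateFlux

/-- The conjugate flux `Ψ(s) = -Φ(1/s)`, the flux in the equation for the inverse profiles. -/
def conjugateFlux {𝕜 : Type*} [DivisionRing 𝕜] (Φ : 𝕜 → 𝕜) (s : 𝕜) : 𝕜 :=
  -Φ (1 / s)

variable {𝕜 : Type*} [RCLike 𝕜] {Φ f g : 𝕜 → 𝕜} {x c : 𝕜}

lemma eventually_conjugateFlux_deriv_leftInverse_eq (hf : ContDiffAt 𝕜 1 f x)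
    (hf' : deriv f x ≠ 0) (hg : ∀ᶠ z in 𝓝 x, g (f z) = z) :
    ∀ᶠ p in 𝓝 (f x), conjugateFlux Φ (deriv g p) = -Φ (deriv f (g p)) := by
  have hf'_near : ∀ᶠ z in 𝓝 x, deriv f z ≠ 0 :=
    (hf.derivWithin (m := 0) (by simp)).continuousAt.eventually_ne hf'
  rw [← (hf.hasStrictDerivAt one_ne_zero).map_nhds_eq hf', eventually_map]
  filter_upwards [hf.eventually (by simp), hf'_near, hg.eventually_nhds] with z hfz hfz' hgz
  have hgz' : deriv g (f z) = (deriv f z)⁻¹ :=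
    ((hfz.hasStrictDerivAt one_ne_zero).to_local_left_inverse hfz' hgz).hasDerivAt.deriv
  rw [conjugateFlux, hgz', hgz.self_of_nhds, one_div, inv_inv]

lemma hasDerivAt_conjugateFlux_deriv_leftInverse (hf : ContDiffAt 𝕜 1 f x) (hf' : deriv f x ≠ 0)
    (hg : ∀ᶠ z in 𝓝 x, g (f z) = z) (hΦ : HasDerivAt (fun y => Φ (deriv f y)) c x) :
    HasDerivAt (fun p => conjugateFlux Φ (deriv g p)) (-c / deriv f x) (f x) := by
  have hg' : HasDerivAt g (deriv f x)⁻¹ (f x) :=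
    ((hf.hasStrictDerivAt one_ne_zero).to_local_left_inverse hf' hg).hasDerivAt
  have hflux : HasDerivAt (fun p => -Φ (deriv f (g p))) (-(c * (deriv f x)⁻¹)) (f x) :=
    (hΦ.comp_of_eq (f x) hg' hg.self_of_nhds.symm).neg
  rw [neg_div, div_eq_mul_inv]
  exact hflux.congr_of_eventuallyEq (eventually_conjugateFlux_deriv_leftInverse_eq hf hf' hg)

end ConjugateFlux

lemma deriv_inverseProfile_eq_deriv_conjugateFlux {𝕜 : Type*} [RCLike 𝕜] {Φ : 𝕜 → 𝕜}
    {u X : 𝕜 → 𝕜 → 𝕜} {x t : 𝕜} (hu : ContDiffAt 𝕜 2 u.uncurry (x, t))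
    (hux : deriv (fun z => u z t) x ≠ 0)
    (hΦ : DifferentiableAt 𝕜 Φ (deriv (fun z => u z t) x))
    (hpde : deriv (fun s => u x s) t = deriv (fun y => Φ (deriv (fun z => u z t) y)) x)
    (hX : ∀ᶠ z in 𝓝 (x, t), X (u z.1 z.2) z.2 = z.1) :
    deriv (fun s => X (u x t) s) t =
      deriv (fun p => conjugateFlux Φ (deriv (fun q => X q t) p)) (u x t) := by
  have hu_slice : ContDiffAt 𝕜 2 (fun z => u z t) x :=
    hu.comp x (contDiff_prodMk_left t).contDiffAt
  have hX_slice : ∀ᶠ z in 𝓝 x, X (u z t) t = z :=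
    (Continuous.prodMk_left t).continuousAt.eventually hX
  have hux_diff : DifferentiableAt 𝕜 (deriv fun z => u z t) x :=
    (hu_slice.derivWithin (m := 1) (by norm_num)).differentiableAt one_ne_zero
  have hflux : HasDerivAt (fun y => Φ (deriv (fun z => u z t) y)) (deriv (fun s => u x s) t) x :=
    hpde ▸ (hΦ.comp x hux_diff).hasDerivAt
  rw [deriv_inverseProfile_time (hu.hasStrictFDerivAt two_ne_zero) hux hX,
    (hasDerivAt_conjugateFlux_deriv_leftInverse (hu_slice.of_le one_le_two) hux hX_slice
      hflux).deriv]

theorem differentiated_conjugate_and_backlund_general {𝕜 : Type*} [RCLike 𝕜] {Φ : 𝕜 → 𝕜}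
    {u X w v : 𝕜 → 𝕜 → 𝕜} {S : Set (𝕜 × 𝕜)} (hS : IsOpen S) (hu : ContDiffOn 𝕜 2 u.uncurry S)
    (hux : ∀ x t, (x, t) ∈ S → deriv (fun z => u z t) x ≠ 0)
    (hΦ : ∀ x t, (x, t) ∈ S → DifferentiableAt 𝕜 Φ (deriv (fun z => u z t) x))
    (hpde : ∀ x t, (x, t) ∈ S →
      deriv (fun s => u x s) t = deriv (fun y => Φ (deriv (fun z => u z t) y)) x)
    (hX : ∀ x t, (x, t) ∈ S → X (u x t) t = x)
    (hw : ∀ p t, w p t = deriv (fun q => X q t) p)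
    (hv : ∀ x t, v x t = deriv (fun z => u z t) x) (x t : 𝕜) (hxt : (x, t) ∈ S) :
    deriv (fun s => w (u x t) s) t = deriv (deriv fun p => conjugateFlux Φ (w p t)) (u x t) ∧
      v x t * w (u x t) t = 1 := by
  have hu_at (z) (hz : z ∈ S) : ContDiffAt 𝕜 2 u.uncurry z := hu.contDiffAt (hS.mem_nhds hz)
  have hX_near (z) (hz : z ∈ S) : ∀ᶠ y in 𝓝 z, X (u y.1 y.2) y.2 = y.1 := by
    filter_upwards [hS.mem_nhds hz] with y hy using hX y.1 y.2 hy
  have hu_slice : ContDiffAt 𝕜 2 (fun z => u z t) x :=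
    (hu_at _ hxt).comp x (contDiff_prodMk_left t).contDiffAt
  have hslice : ∀ᶠ z in 𝓝 x, (z, t) ∈ S :=
    (Continuous.prodMk_left t).continuousAt.eventually (hS.mem_nhds hxt)
  have hconj : (fun p => deriv (fun s => X p s) t) =ᶠ[𝓝 (u x t)]
      deriv fun p => conjugateFlux Φ (deriv (fun q => X q t) p) := by
    rw [EventuallyEq, ← (hu_slice.hasStrictDerivAt two_ne_zero).map_nhds_eq (hux x t hxt),
      eventually_map]
    filter_upwards [hslice] with z hz
    exact deriv_inverseProfile_eq_deriv_conjugateFlux (hu_at _ hz) (hux z t hz) (hΦ z t hz)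
      (hpde z t hz) (hX_near _ hz)
  have hX_smooth : ContDiffAt 𝕜 2 X.uncurry (u x t, t) :=
    contDiffAt_inverseProfile (hu_at _ hxt) two_ne_zero (hux x t hxt) (hX_near _ hxt)
  have hX_p : deriv (fun p => X p t) (u x t) = (deriv (fun z => u z t) x)⁻¹ :=
    ((hu_slice.hasStrictDerivAt two_ne_zero).to_local_left_inverse (hux x t hxt)
      (hslice.mono fun z hz => hX z t hz)).hasDerivAt.deriv
  simp only [hw, hv]
  constructor
  · exact (deriv_deriv_comm_of_contDiffAt hX_smooth (by simp)).trans hconj.deriv_eq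
  · rw [hX_p, mul_inv_cancel₀ (hux x t hxt)]

/-- differentiated conjugate equation and Bäcklund relation,
Section 6.2 of Barenblatt–Vázquez. Let `u` be a smooth solution of
`u_t = (Φ(u_x))_x` with `∂ₓu > 0` on a product of open intervals `Ω = I × J`, with
inverse profiles `X(·,t)`. Set `w(p,t) = ∂_p X(p,t)` and `v(x,t) = ∂ₓu(x,t)`. Then
`w` satisfies the differentiated conjugate equation `w_t = (Ψ(w))_{pp}` with
`Ψ(s) = −Φ(1/s)`, and the Bäcklund relation `v(x,t)·w(u(x,t),t) = 1` holds on `Ω`. -/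
theorem differentiated_conjugate_and_backlund
    (Φ : ℝ → ℝ) (hΦsmooth : ContDiffOn ℝ (⊤ : ℕ∞) Φ (Ioi 0))
    (hΦ' : ∀ s : ℝ, 0 < s → 0 < deriv Φ s)
    (xa xb ta tb : ℝ)
    (u : ℝ → ℝ → ℝ)
    (hu_smooth : ContDiffOn ℝ (⊤ : ℕ∞) (fun p : ℝ × ℝ => u p.1 p.2)
      (Ioo xa xb ×ˢ Ioo ta tb))
    (hu_mono : ∀ x ∈ Ioo xa xb, ∀ t ∈ Ioo ta tb, 0 < deriv (fun z => u z t) x)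
    (hu_pde : ∀ x ∈ Ioo xa xb, ∀ t ∈ Ioo ta tb,
      deriv (fun s => u x s) t = deriv (fun y => Φ (deriv (fun z => u z t) y)) x)
    (X : ℝ → ℝ → ℝ)
    (hX_mem : ∀ t ∈ Ioo ta tb, ∀ p : ℝ, (∃ x ∈ Ioo xa xb, u x t = p) →
      X p t ∈ Ioo xa xb ∧ u (X p t) t = p)
    (hX_inv : ∀ t ∈ Ioo ta tb, ∀ x ∈ Ioo xa xb, X (u x t) t = x)
    (w v : ℝ → ℝ → ℝ)
    (hw : ∀ p t : ℝ, w p t = deriv (fun q => X q t) p)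
    (hv : ∀ x t : ℝ, v x t = deriv (fun z => u z t) x) :
    (∀ t ∈ Ioo ta tb, ∀ p : ℝ, (∃ x ∈ Ioo xa xb, u x t = p) →
      deriv (fun s => w p s) t =
        deriv (deriv (fun q => (fun s => -Φ (1 / s)) (w q t))) p) ∧
    ∀ x ∈ Ioo xa xb, ∀ t ∈ Ioo ta tb, v x t * w (u x t) t = 1 := by
  have h := differentiated_conjugate_and_backlund_general (isOpen_Ioo.prod isOpen_Ioo)
    (hu_smooth.of_le ENat.LEInfty.out) (fun x t hz => (hu_mono x hz.1 t hz.2).ne')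
    (fun x t hz => (hΦsmooth.contDiffAt (Ioi_mem_nhds (hu_mono x hz.1 t hz.2))).differentiableAt
      (by simp)) (fun x t hz => hu_pde x hz.1 t hz.2) (fun x t hz => hX_inv t hz.2 x hz.1) hw hv
  exact ⟨fun t ht p ⟨x, hx, hp⟩ => hp ▸ (h x t ⟨hx, ht⟩).1, fun x hx t ht => (h x t ⟨hx, ht⟩).2⟩
end

section
/- Let α > 0, q = 1 + 2α, K > 0, x₀ ∈ ℝ, t₀ > 0, and let F : (−K,K) → ℝ be C² with F' > 0 and F''(ξ) = (1/(2α)) ξ (F'(ξ))^{2+q} for all ξ ∈ (−K,K). Define u(x,t) = F((x−x₀)(t+t₀)^{1/(2α)}) on the shrinking strip S = {(x,t) : t > 0, |x−x₀| < K (t+t₀)^{−1/(2α)}}. Then u is a solution of the reduced equation ∂_t u = (∂ₓu)^{−2(1+α)} ∂ₓ²u on S, and its gradient satisfies ∂ₓu(x,t) = (t+t₀)^{1/(2α)} F'((x−x₀)(t+t₀)^{1/(2α)}), which diverges like t^{1/(2α)} as t → ∞. -/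
open Set Filter Topology

/-! Write `c = 1 / (2α)`, `τ = t + t₀` and `ξ = (x - x₀) τ ^ c`. Differentiating the profile gives
`u_t = c ξ F'(ξ) / τ`, `u_x = τ ^ c F'(ξ)` and `u_xx = τ ^ (2c) F''(ξ)`. The right-hand side of the
equation thus carries the power `τ ^ (-2(1 + α)c + 2c) = τ ^ (-2αc) = τ⁻¹`, the same as `u_t`; after
cancelling it, the equation is the profile equation `F'' = c ξ F' ^ (2 + q)`. -/

/-- The self-similar function with profile `F` and time exponent `c`, centred at `x₀` and with time
origin `-t₀`. Its arguments `x` (space) and `t` (time) are curried, in this order. -/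
noncomputable def selfSimilar (F : ℝ → ℝ) (c x₀ t₀ x t : ℝ) : ℝ :=
  F ((x - x₀) * (t + t₀) ^ c)

section Derivatives

variable {F F' : ℝ → ℝ} {m c x₀ t₀ x t : ℝ}

theorem hasDerivAt_selfSimilar_space (hF : HasDerivAt F m ((x - x₀) * (t + t₀) ^ c)) :
    HasDerivAt (fun y => selfSimilar F c x₀ t₀ y t) ((t + t₀) ^ c * m) x := by
  have hξ : HasDerivAt (fun y => (y - x₀) * (t + t₀) ^ c) ((t + t₀) ^ c) x := by
    simpa using ((hasDerivAt_id x).sub_const x₀).mul_const ((t + t₀) ^ c)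
  exact (hF.comp x hξ).congr_deriv (mul_comm _ _)

theorem hasDerivAt_selfSimilar_time (hτ : t + t₀ ≠ 0)
    (hF : HasDerivAt F m ((x - x₀) * (t + t₀) ^ c)) :
    HasDerivAt (fun s => selfSimilar F c x₀ t₀ x s)
      (c * ((x - x₀) * (t + t₀) ^ c) * m / (t + t₀)) t := by
  have hτc : HasDerivAt (fun s => (s + t₀) ^ c) (c * (t + t₀) ^ (c - 1)) t := by
    simpa using ((hasDerivAt_id t).add_const t₀).rpow_const (p := c) (Or.inl hτ)
  refine (hF.comp t (hτc.const_mul (x - x₀))).congr_deriv ?_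
  rw [Real.rpow_sub_one hτ]
  ring

theorem hasDerivAt_deriv_selfSimilar_space
    (hF : ∀ᶠ ζ in 𝓝 ((x - x₀) * (t + t₀) ^ c), HasDerivAt F (F' ζ) ζ)
    (hF' : HasDerivAt F' m ((x - x₀) * (t + t₀) ^ c)) :
    HasDerivAt (deriv fun y => selfSimilar F c x₀ t₀ y t)
      ((t + t₀) ^ c * ((t + t₀) ^ c * m)) x := by
  have hcont : ContinuousAt (fun y => (y - x₀) * (t + t₀) ^ c) x := by fun_prop
  have hderiv : (deriv fun y => selfSimilar F c x₀ t₀ y t) =ᶠ[𝓝 x]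
      fun y => (t + t₀) ^ c * selfSimilar F' c x₀ t₀ y t :=
    (hcont.eventually hF).mono fun _ hy => (hasDerivAt_selfSimilar_space hy).deriv
  exact ((hasDerivAt_selfSimilar_space hF').const_mul _).congr_of_eventuallyEq hderiv

end Derivatives

theorem rpow_mul_rpow_neg_mul_eq_div {α τ g : ℝ} (hα : α ≠ 0) (hτ : 0 < τ) (hg : 0 ≤ g) (m : ℝ) :
    (τ ^ (1 / (2 * α)) * g) ^ (-(2 * (1 + α))) *
        (τ ^ (1 / (2 * α)) * (τ ^ (1 / (2 * α)) * m)) =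
      g ^ (-(2 * (1 + α))) * m / τ := by
  have hscale : (τ ^ (1 / (2 * α))) ^ (-(2 * (1 + α))) *
      (τ ^ (1 / (2 * α)) * τ ^ (1 / (2 * α))) = τ⁻¹ := by
    rw [← Real.rpow_mul hτ.le, ← Real.rpow_add hτ, ← Real.rpow_add hτ, ← Real.rpow_neg_one]
    congr 1
    field_simp
    ring
  rw [Real.mul_rpow (by positivity) hg]
  linear_combination g ^ (-(2 * (1 + α))) * m * hscale

theorem rpow_mul_rpow_of_add_eq_one {g a b : ℝ} (hg : 0 < g) (hab : a + b = 1) :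
    g ^ a * g ^ b = g := by
  rw [← Real.rpow_add hg, hab, Real.rpow_one]

theorem abs_lt_mul_rpow_neg_iff {a K c τ : ℝ} (hτ : 0 < τ) :
    |a| < K * τ ^ (-c) ↔ a * τ ^ c ∈ Ioo (-K) K := by
  have hτc : 0 < τ ^ c := Real.rpow_pos_of_pos hτ c
  rw [Real.rpow_neg hτ.le, ← div_eq_mul_inv, lt_div_iff₀ hτc, mem_Ioo, ← abs_lt, abs_mul,
    abs_of_pos hτc]

theorem selfSimilar_solution_reduced_equation_general
    {α q x₀ t₀ : ℝ} (hα : α ≠ 0) (hq : q = 1 + 2 * α) {D : Set ℝ} (hD : IsOpen D)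
    {F F' F'' : ℝ → ℝ}
    (hF' : ∀ ξ ∈ D, HasDerivAt F (F' ξ) ξ)
    (hF'' : ∀ ξ ∈ D, HasDerivAt F' (F'' ξ) ξ)
    (hF'pos : ∀ ξ ∈ D, 0 < F' ξ)
    (hODE : ∀ ξ ∈ D, F'' ξ = 1 / (2 * α) * ξ * F' ξ ^ (2 + q))
    {x t : ℝ} (hτ : 0 < t + t₀) (hξ : (x - x₀) * (t + t₀) ^ (1 / (2 * α)) ∈ D) :
    let u := selfSimilar F (1 / (2 * α)) x₀ t₀
    deriv (fun s => u x s) t =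
        deriv (fun y => u y t) x ^ (-(2 * (1 + α))) * deriv (deriv (fun y => u y t)) x ∧
      deriv (fun y => u y t) x =
        (t + t₀) ^ (1 / (2 * α)) * F' ((x - x₀) * (t + t₀) ^ (1 / (2 * α))) := by
  intro u
  have hut := (hasDerivAt_selfSimilar_time hτ.ne' (hF' _ hξ)).deriv
  have hux := (hasDerivAt_selfSimilar_space (hF' _ hξ)).deriv
  have huxx := (hasDerivAt_deriv_selfSimilar_space
    (eventually_of_mem (hD.mem_nhds hξ) hF') (hF'' _ hξ)).deriv
  have hprofile : F' ((x - x₀) * (t + t₀) ^ (1 / (2 * α))) ^ (-(2 * (1 + α))) *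
      F'' ((x - x₀) * (t + t₀) ^ (1 / (2 * α))) =
        1 / (2 * α) * ((x - x₀) * (t + t₀) ^ (1 / (2 * α))) *
          F' ((x - x₀) * (t + t₀) ^ (1 / (2 * α))) := by
    rw [hODE _ hξ, hq, mul_left_comm, rpow_mul_rpow_of_add_eq_one (hF'pos _ hξ) (by ring)]
  refine ⟨?_, hux⟩
  rw [hut, hux, huxx, rpow_mul_rpow_neg_mul_eq_div hα hτ (hF'pos _ hξ).le, hprofile]

/-- self-similar solutions of the reduced equation, Sections 2 and 8
of Barenblatt–Vázquez. Let `α > 0`, `q = 1 + 2α`, `K > 0`, `t₀ > 0`, and let `F` be a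
`C²` profile on `(−K,K)` with `F' > 0` solving `F''(ξ) = (1/(2α)) ξ (F'(ξ))^{2+q}`.
Then `u(x,t) = F((x−x₀)(t+t₀)^{1/(2α)})`, defined on the shrinking strip
`|x−x₀| < K (t+t₀)^{−1/(2α)}`, `t > 0`, solves the reduced equation
`u_t = (u_x)^{−2(1+α)} u_{xx}`, and its gradient is
`∂ₓu(x,t) = (t+t₀)^{1/(2α)} F'((x−x₀)(t+t₀)^{1/(2α)})`, diverging like `t^{1/(2α)}`
as `t → ∞`. -/
theorem selfSimilar_solution_reduced_equation
    (α q K x₀ t₀ : ℝ) (hα : 0 < α) (hq : q = 1 + 2 * α) (hK : 0 < K) (ht₀ : 0 < t₀)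
    (F F' F'' : ℝ → ℝ)
    (hF' : ∀ ξ ∈ Ioo (-K) K, HasDerivAt F (F' ξ) ξ)
    (hF'' : ∀ ξ ∈ Ioo (-K) K, HasDerivAt F' (F'' ξ) ξ)
    (hF'pos : ∀ ξ ∈ Ioo (-K) K, 0 < F' ξ)
    (hODE : ∀ ξ ∈ Ioo (-K) K, F'' ξ = 1 / (2 * α) * ξ * F' ξ ^ (2 + q))
    (u : ℝ → ℝ → ℝ)
    (hu : ∀ x t : ℝ, u x t = F ((x - x₀) * (t + t₀) ^ (1 / (2 * α)))) :
    ∀ x t : ℝ, 0 < t → |x - x₀| < K * (t + t₀) ^ (-(1 / (2 * α))) →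
      deriv (fun s => u x s) t =
        deriv (fun y => u y t) x ^ (-(2 * (1 + α))) * deriv (deriv (fun y => u y t)) x ∧
      deriv (fun y => u y t) x =
        (t + t₀) ^ (1 / (2 * α)) * F' ((x - x₀) * (t + t₀) ^ (1 / (2 * α))) := by
  obtain rfl : u = selfSimilar F (1 / (2 * α)) x₀ t₀ := funext₂ hu
  exact fun x t ht hx => selfSimilar_solution_reduced_equation_general hα.ne' hq isOpen_Ioo
    hF' hF'' hF'pos hODE (add_pos ht ht₀) ((abs_lt_mul_rpow_neg_iff (add_pos ht ht₀)).1 hx)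
end

section
/- Let Φ : (0,∞) → ℝ be C¹ with Φ'(s) > 0 for all s > 0, and let c > 0 and V > 0. Then the following are equivalent: (i) the integral ∫₀^V Φ'(s)/s ds is finite; (ii) there exist δ > 0 and a continuous function f : [0,δ) → [0,∞) with f(0) = 0, f > 0 and differentiable on (0,δ), satisfying the traveling wave equation Φ'(f(ξ)) f'(ξ) = c f(ξ) on (0,δ). (The function v(x,t) = f(ct − x) for ct − x > 0, extended by 0, is then a traveling wave solution of v_t = (Φ(v))_{xx} with a sharp finite interface at x = ct.) -/
/-!
Put `F s = c s / Φ'(s)`, so that the traveling wave equation reads `f' = F(f)`. If `f` increases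
from `0` and solves this equation, its inverse is an antiderivative of `1/F` continuous up to `0`;
a monotone function continuous on a closed interval has an integrable derivative, so
`1/F = Φ'(s)/(c s)` is integrable at `0`. Conversely, if it is integrable, then the inverse of
`x ↦ ∫₀ˣ ds / F(s)` solves `f' = F(f)`.

The primitive `∫₀ˣ ds / F(s)` is differentiable at every point, not just almost everywhere:
integrating by parts, `Φ'(s)/s` is everywhere the derivative of `Φ(s)/s + ∫ Φ(s)/s² ds`, and the
integral of an integrable function differs from any antiderivative by a constant.
-/

open Set Filter Topology

theorem exists_hasDerivAt_of_continuousOn {E : Type*} [NormedAddCommGroup E] [NormedSpace ℝ E]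
    [CompleteSpace E] {S : Set ℝ} (hS : IsOpen S) (hS' : S.OrdConnected) {k : ℝ → E}
    (hk : ContinuousOn k S) : ∃ K : ℝ → E, ∀ x ∈ S, HasDerivAt K (k x) x := by
  rcases S.eq_empty_or_nonempty with rfl | ⟨x₀, hx₀⟩
  · exact ⟨0, by simp⟩
  · refine ⟨fun x => ∫ t in x₀..x, k t, fun x hx => ?_⟩
    exact intervalIntegral.integral_hasDerivAt_right
      (hk.mono (hS'.uIcc_subset hx₀ hx)).intervalIntegrable
      (hk.stronglyMeasurableAtFilter hS x hx) (hk.continuousAt (hS.mem_nhds hx))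

theorem exists_hasDerivAt_deriv_mul {S : Set ℝ} (hS : IsOpen S) (hS' : S.OrdConnected)
    {φ φ' w w' : ℝ → ℝ} (hφ : ∀ x ∈ S, HasDerivAt φ (φ' x) x)
    (hw : ∀ x ∈ S, HasDerivAt w (w' x) x) (hw' : ContinuousOn w' S) :
    ∃ K : ℝ → ℝ, ∀ x ∈ S, HasDerivAt K (φ' x * w x) x := by
  obtain ⟨L, hL⟩ := exists_hasDerivAt_of_continuousOn hS hS'
    ((HasDerivAt.continuousOn hφ).mul hw')
  refine ⟨φ * w - L, fun x hx => ?_⟩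
  simpa using ((hφ x hx).mul (hw x hx)).sub (hL x hx)

theorem hasDerivAt_integral_of_hasDerivAt_Ioo {E : Type*} [NormedAddCommGroup E] [NormedSpace ℝ E]
    [CompleteSpace E] {a b : ℝ} {K k : ℝ → E} (hK : ∀ x ∈ Ioo a b, HasDerivAt K (k x) x)
    (hk : IntervalIntegrable k MeasureTheory.volume a b) {x : ℝ} (hx : x ∈ Ioo a b) :
    HasDerivAt (fun y => ∫ t in a..y, k t) (k x) x := by
  have hab : a ≤ b := (hx.1.trans hx.2).le
  have hint : ∀ y ∈ Ioo a b, ∀ z ∈ Icc a b, IntervalIntegrable k MeasureTheory.volume z y :=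
    fun y hy z hz => hk.mono_set <| by
      rw [uIcc_of_le hab]; exact uIcc_subset_Icc hz (Ioo_subset_Icc_self hy)
  have hsplit : (fun y => ∫ t in a..y, k t) =ᶠ[𝓝 x]
      fun y => (∫ t in a..x, k t) + (K y - K x) := by
    filter_upwards [Ioo_mem_nhds hx.1 hx.2] with y hy
    have hxy := hint y hy x (Ioo_subset_Icc_self hx)
    rw [← intervalIntegral.integral_add_adjacent_intervals
        (hint x hx a (left_mem_Icc.2 hab)) hxy,
      intervalIntegral.integral_eq_sub_of_hasDerivAt
        (fun t ht => hK t (ordConnected_Ioo.uIcc_subset hx hy ht)) hxy]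
  exact (((hK x hx).sub_const _).const_add _).congr_of_eventuallyEq hsplit

theorem exists_continuous_invOn_of_strictMonoOn_Icc {α β : Type*}
    [ConditionallyCompleteLinearOrder α] [DenselyOrdered α] [TopologicalSpace α] [OrderTopology α]
    [LinearOrder β] [TopologicalSpace β] [OrderTopology β] {a b : α} (hab : a ≤ b) {K : α → β}
    (hcont : ContinuousOn K (Icc a b)) (hmono : StrictMonoOn K (Icc a b)) :
    ∃ g : β → α, Continuous g ∧ InvOn g K (Icc a b) (Icc (K a) (K b)) := by
  have himage : K '' Icc a b = Icc (K a) (K b) :=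
    hcont.image_Icc_of_monotoneOn hab hmono.monotoneOn
  have hKab : K a ≤ K b := hmono.monotoneOn (left_mem_Icc.2 hab) (right_mem_Icc.2 hab) hab
  let e : Icc a b ≃o Icc (K a) (K b) :=
    (hmono.orderIso K (Icc a b)).trans (OrderIso.setCongr _ _ himage)
  have he : ∀ x : Icc a b, (e x : β) = K x := fun _ => rfl
  refine ⟨IccExtend hKab fun y => (e.symm y : α),
    (continuous_subtype_val.comp e.symm.continuous).Icc_extend', fun x hx => ?_, fun y hy => ?_⟩
  · have hKx : K x = e ⟨x, hx⟩ := rfl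
    rw [hKx, IccExtend_val, e.symm_apply_apply]
  · rw [IccExtend_of_mem _ _ hy, ← he, e.apply_symm_apply]

theorem exists_continuous_invOn_hasDerivAt_of_pos {a b : ℝ} (hab : a < b) {K k : ℝ → ℝ}
    (hcont : ContinuousOn K (Icc a b)) (hderiv : ∀ x ∈ Ioo a b, HasDerivAt K (k x) x)
    (hpos : ∀ x ∈ Ioo a b, 0 < k x) :
    K a < K b ∧ ∃ g : ℝ → ℝ, Continuous g ∧ InvOn g K (Icc a b) (Icc (K a) (K b)) ∧
      ∀ y ∈ Ioo (K a) (K b), g y ∈ Ioo a b ∧ HasDerivAt g (k (g y))⁻¹ y := by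
  have hmono : StrictMonoOn K (Icc a b) := by
    refine strictMonoOn_of_hasDerivWithinAt_pos (convex_Icc a b) hcont (f' := k) ?_ ?_ <;>
      rw [interior_Icc]
    exacts [fun x hx => (hderiv x hx).hasDerivWithinAt, hpos]
  obtain ⟨g, hg, hinv⟩ := exists_continuous_invOn_of_strictMonoOn_Icc hab.le hcont hmono
  refine ⟨hmono (left_mem_Icc.2 hab.le) (right_mem_Icc.2 hab.le) hab, g, hg, hinv, ?_⟩
  intro y hy
  have hgy : g y ∈ Ioo a b := by
    rw [← hcont.image_Ioo_of_strictMonoOn hab.le hmono] at hy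
    obtain ⟨x, hx, rfl⟩ := hy
    rwa [hinv.1 (Ioo_subset_Icc_self hx)]
  refine ⟨hgy, (hderiv _ hgy).of_local_left_inverse hg.continuousAt (hpos _ hgy).ne' ?_⟩
  filter_upwards [Icc_mem_nhds hy.1 hy.2] with z hz using hinv.2 hz

/-- A solution of the autonomous equation `f' = F(f)` on `(0, δ)` that starts at the level `a` and
lies above it at all later times. For `a = 0` and `F s = c s / Φ'(s)` these are the profiles of
traveling waves of speed `c` with a sharp front. -/
structure IsDepartingSolution (F : ℝ → ℝ) (a δ : ℝ) (f : ℝ → ℝ) : Prop where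
  continuousOn : ContinuousOn f (Ico 0 δ)
  apply_zero : f 0 = a
  lt_apply : ∀ ξ ∈ Ioo 0 δ, a < f ξ
  hasDerivAt : ∀ ξ ∈ Ioo 0 δ, HasDerivAt f (F (f ξ)) ξ

section Autonomous

variable {F : ℝ → ℝ} {a b : ℝ}

theorem exists_isDepartingSolution_of_hasDerivAt_inv (hab : a < b) (hF : ∀ x ∈ Ioo a b, 0 < F x)
    {G : ℝ → ℝ} (hcont : ContinuousOn G (Icc a b)) (hG : ∀ x ∈ Ioo a b, HasDerivAt G (F x)⁻¹ x) :
    ∃ δ, 0 < δ ∧ ∃ f, IsDepartingSolution F a δ f := by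
  obtain ⟨hGab, g, hg, hinv, hderiv⟩ :=
    exists_continuous_invOn_hasDerivAt_of_pos hab hcont hG fun x hx => inv_pos.2 (hF x hx)
  have hmem : ∀ ξ ∈ Ioo 0 (G b - G a), G a + ξ ∈ Ioo (G a) (G b) :=
    fun ξ hξ => ⟨lt_add_of_pos_right _ hξ.1, lt_sub_iff_add_lt'.1 hξ.2⟩
  refine ⟨G b - G a, sub_pos.2 hGab, fun ξ => g (G a + ξ), ?_, ?_, ?_, fun ξ hξ => ?_⟩
  · exact (hg.comp (continuous_const_add _)).continuousOn
  · simpa using hinv.1 (left_mem_Icc.2 hab.le)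
  · exact fun ξ hξ => (hderiv _ (hmem ξ hξ)).1.1
  · simpa using (hderiv _ (hmem ξ hξ)).2.comp_const_add (G a) ξ

theorem exists_isDepartingSolution_of_integrableOn_inv (hab : a < b)
    (hF : ∀ x ∈ Ioo a b, 0 < F x) {K : ℝ → ℝ} (hK : ∀ x ∈ Ioo a b, HasDerivAt K (F x)⁻¹ x)
    (hint : MeasureTheory.IntegrableOn (fun x => (F x)⁻¹) (Ioo a b)) :
    ∃ δ, 0 < δ ∧ ∃ f, IsDepartingSolution F a δ f := by
  have hint' : IntervalIntegrable (fun x => (F x)⁻¹) MeasureTheory.volume a b :=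
    (intervalIntegrable_iff_integrableOn_Ioo_of_le hab.le).2 hint
  have hcont : ContinuousOn (fun x => ∫ t in a..x, (F t)⁻¹) (Icc a b) := by
    rw [← uIcc_of_le hab.le]
    exact intervalIntegral.continuousOn_primitive_interval' hint' left_mem_uIcc
  exact exists_isDepartingSolution_of_hasDerivAt_inv hab hF hcont
    fun x hx => hasDerivAt_integral_of_hasDerivAt_Ioo hK hint' hx

theorem IsDepartingSolution.exists_integrableOn_inv {δ : ℝ} {f : ℝ → ℝ} (hδ : 0 < δ)
    (hF : ∀ x, a < x → 0 < F x) (hf : IsDepartingSolution F a δ f) :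
    ∃ x₁, a < x₁ ∧ MeasureTheory.IntegrableOn (fun x => (F x)⁻¹) (Ioc a x₁) := by
  have hsub : Ioo 0 (δ / 2) ⊆ Ioo 0 δ := Ioo_subset_Ioo_right (half_le_self hδ.le)
  obtain ⟨hf_lt, g, hg, hinv, hderiv⟩ :=
    exists_continuous_invOn_hasDerivAt_of_pos (half_pos hδ)
      (hf.continuousOn.mono (Icc_subset_Ico_right (half_lt_self hδ)))
      (fun ξ hξ => hf.hasDerivAt ξ (hsub hξ)) (fun ξ hξ => hF _ (hf.lt_apply ξ (hsub hξ)))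
  rw [hf.apply_zero] at hf_lt hinv hderiv
  refine ⟨f (δ / 2), hf_lt, intervalIntegral.integrableOn_deriv_of_nonneg hg.continuousOn
    (fun x hx => ?_) fun x hx => (inv_pos.2 (hF x hx.1)).le⟩
  simpa only [hinv.2 (Ioo_subset_Icc_self hx)] using (hderiv x hx).2

theorem integrableOn_inv_iff_exists_isDepartingSolution (hab : a < b)
    (hF : ∀ x, a < x → 0 < F x) {K : ℝ → ℝ} (hK : ∀ x, a < x → HasDerivAt K (F x)⁻¹ x) :
    MeasureTheory.IntegrableOn (fun x => (F x)⁻¹) (Ioo a b) ↔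
      ∃ δ, 0 < δ ∧ ∃ f, IsDepartingSolution F a δ f := by
  refine ⟨exists_isDepartingSolution_of_integrableOn_inv hab (fun x hx => hF x hx.1)
    fun x hx => hK x hx.1, ?_⟩
  rintro ⟨δ, hδ, f, hf⟩
  obtain ⟨x₁, hx₁, hint⟩ := hf.exists_integrableOn_inv hδ hF
  have hint' : MeasureTheory.IntegrableOn (fun x => (F x)⁻¹) (Ioc x₁ b) :=
    intervalIntegral.integrableOn_deriv_of_nonneg
      (HasDerivAt.continuousOn fun x hx => hK x (hx₁.trans_le hx.1))
      (fun x hx => hK x (hx₁.trans hx.1)) fun x hx => (inv_pos.2 (hF x (hx₁.trans hx.1))).le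
  exact (hint.union hint').mono_set (Ioo_subset_Ioc_self.trans Ioc_subset_Ioc_union_Ioc)

end Autonomous

theorem exists_hasDerivAt_deriv_div_id {Φ : ℝ → ℝ} (hΦ : ∀ s, 0 < s → DifferentiableAt ℝ Φ s) :
    ∃ K : ℝ → ℝ, ∀ s, 0 < s → HasDerivAt K (deriv Φ s / s) s := by
  simp only [div_eq_mul_inv]
  refine exists_hasDerivAt_deriv_mul isOpen_Ioi ordConnected_Ioi
    (fun s hs => (hΦ s hs).hasDerivAt)
    (fun s hs => hasDerivAt_inv (ne_of_gt hs)) ?_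
  exact (ContinuousOn.inv₀ (by fun_prop) fun s hs => pow_ne_zero 2 (ne_of_gt hs)).neg

theorem isDepartingSolution_zero_iff_travelingWave {Φ : ℝ → ℝ}
    (hΦ' : ∀ s, 0 < s → 0 < deriv Φ s) {c δ : ℝ} {f : ℝ → ℝ} :
    IsDepartingSolution (fun s => c * s / deriv Φ s) 0 δ f ↔
      ContinuousOn f (Ico 0 δ) ∧ f 0 = 0 ∧
        (∀ ξ ∈ Ioo (0:ℝ) δ, 0 < f ξ) ∧
        DifferentiableOn ℝ f (Ioo 0 δ) ∧
        ∀ ξ ∈ Ioo (0:ℝ) δ, deriv Φ (f ξ) * deriv f ξ = c * f ξ := by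
  constructor
  · rintro ⟨hcont, hzero, hpos, hderiv⟩
    refine ⟨hcont, hzero, hpos, fun ξ hξ => (hderiv ξ hξ).differentiableAt.differentiableWithinAt,
      fun ξ hξ => ?_⟩
    rw [(hderiv ξ hξ).deriv, mul_div_cancel₀ _ (hΦ' _ (hpos ξ hξ)).ne']
  · rintro ⟨hcont, hzero, hpos, hdiff, hode⟩
    refine ⟨hcont, hzero, hpos, fun ξ hξ => ?_⟩
    rw [← hode ξ hξ, mul_div_cancel_left₀ _ (hΦ' _ (hpos ξ hξ)).ne']
    exact (hdiff.differentiableAt (isOpen_Ioo.mem_nhds hξ)).hasDerivAt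

theorem interface_criterion_traveling_waves_general
    (Φ : ℝ → ℝ) (hΦ' : ∀ s : ℝ, 0 < s → 0 < deriv Φ s)
    (c V : ℝ) (hc : 0 < c) (hV : 0 < V) :
    MeasureTheory.IntegrableOn (fun s => deriv Φ s / s) (Ioo 0 V) ↔
      ∃ δ : ℝ, 0 < δ ∧ ∃ f : ℝ → ℝ,
        ContinuousOn f (Ico 0 δ) ∧ f 0 = 0 ∧
        (∀ ξ ∈ Ioo (0:ℝ) δ, 0 < f ξ) ∧
        DifferentiableOn ℝ f (Ioo 0 δ) ∧
        ∀ ξ ∈ Ioo (0:ℝ) δ, deriv Φ (f ξ) * deriv f ξ = c * f ξ := by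
  have hinv : ∀ s, (c * s / deriv Φ s)⁻¹ = c⁻¹ * (deriv Φ s / s) := fun s => by
    rw [inv_div, div_mul_eq_div_div_swap, div_eq_inv_mul]
  obtain ⟨K, hK⟩ := exists_hasDerivAt_deriv_div_id fun s hs =>
    differentiableAt_of_deriv_ne_zero (hΦ' s hs).ne'
  have hK' : ∀ s, 0 < s → HasDerivAt (fun s => c⁻¹ * K s) (c * s / deriv Φ s)⁻¹ s :=
    fun s hs => hinv s ▸ (hK s hs).const_mul c⁻¹
  have hcriterion := integrableOn_inv_iff_exists_isDepartingSolution hV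
    (fun s hs => div_pos (mul_pos hc hs) (hΦ' s hs)) hK'
  simp only [hinv, isDepartingSolution_zero_iff_travelingWave hΦ'] at hcriterion
  rw [← hcriterion]
  exact (MeasureTheory.integrable_const_mul_iff (inv_ne_zero hc.ne').isUnit _).symm

/-- the Oleinik–Kalashnikov–Chzhou interface criterion, Section 5.4
of Barenblatt–Vázquez. For `Φ : (0,∞) → ℝ` of class `C¹` with `Φ' > 0`, and any
wave speed `c > 0` and level `V > 0`, the integral `∫₀^V Φ'(s)/s ds` is finite if and
only if there is a nontrivial traveling wave front profile: a continuous function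
`f ≥ 0` on `[0,δ)` with `f(0) = 0`, positive and differentiable on `(0,δ)`, solving
`Φ'(f(ξ)) f'(ξ) = c f(ξ)` on `(0,δ)`. (Then `v(x,t) = f(ct−x)`, extended by `0`, is
a traveling wave solution of `v_t = (Φ(v))_{xx}` with a sharp interface at `x = ct`.) -/
theorem interface_criterion_traveling_waves
    (Φ : ℝ → ℝ) (hΦsmooth : ContDiffOn ℝ 1 Φ (Ioi 0))
    (hΦ' : ∀ s : ℝ, 0 < s → 0 < deriv Φ s)
    (c V : ℝ) (hc : 0 < c) (hV : 0 < V) :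
    MeasureTheory.IntegrableOn (fun s => deriv Φ s / s) (Ioo 0 V) ↔
      ∃ δ : ℝ, 0 < δ ∧ ∃ f : ℝ → ℝ,
        ContinuousOn f (Ico 0 δ) ∧ f 0 = 0 ∧
        (∀ ξ ∈ Ioo (0:ℝ) δ, 0 < f ξ) ∧
        DifferentiableOn ℝ f (Ioo 0 δ) ∧
        ∀ ξ ∈ Ioo (0:ℝ) δ, deriv Φ (f ξ) * deriv f ξ = c * f ξ :=
  interface_criterion_traveling_waves_general Φ hΦ' c V hc hV
end
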